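/- arXiv:2505.03104 — 3 statements merged into one kernel-verified Lean document; each statement's English description precedes it below -/
import Mathlib

section
/- For every dimension d ≥ 1 and every M > 0 there exists a constant C > 0, depending only on d and M, such that the following holds: for every μ ∈ ℝ^d, every η > 0, and every symmetric positive definite matrix Σ ∈ ℝ^{d×d} with ‖Σ‖_op ≤ M and η‖Σ‖_op ≤ 1/6, if ξ is a random vector with the Gaussian distribution N(μ, ηΣ), then E[ e^{|ξ|} · 1_{{|ξ−μ| ≥ 1/3}} ] ≤ C η e^{|μ|}. -/
open MeasureTheory Real
open scoped RealInnerProductSpace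

/-- The operator (spectral) norm of a real matrix, viewed as a linear map on
Euclidean space. -/
noncomputable def matOpNorm {d : ℕ} (A : Matrix (Fin d) (Fin d) ℝ) : ℝ :=
  ‖LinearMap.toContinuousLinearMap (Matrix.toEuclideanLin A)‖

/-- The Gaussian measure on `ℝ^d` with mean `μ` and (positive definite) covariance
matrix `Γ`, defined through its density with respect to Lebesgue measure. -/
noncomputable def gaussianMeasure {d : ℕ} (μ : EuclideanSpace ℝ (Fin d))
    (Γ : Matrix (Fin d) (Fin d) ℝ) : Measure (EuclideanSpace ℝ (Fin d)) :=
  volume.withDensity fun x =>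
    ENNReal.ofReal (Real.sqrt (((2 * π) ^ d * Γ.det))⁻¹ *
      Real.exp (-⟪x - μ, Matrix.toEuclideanLin Γ⁻¹ (x - μ)⟫ / 2))

/-- If `A` is positive definite with operator norm at most `s`, then the quadratic form of `A⁻¹`
dominates `‖v‖² / s`. -/
lemma Matrix.PosDef.norm_sq_div_le_inner_inv {d : ℕ} {A : Matrix (Fin d) (Fin d) ℝ}
    (hA : A.PosDef) {s : ℝ} (hs : 0 < s) (hAs : matOpNorm A ≤ s) (v : EuclideanSpace ℝ (Fin d)) :
    ‖v‖ ^ 2 / s ≤ ⟪v, Matrix.toEuclideanLin A⁻¹ v⟫ := by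
  set w := Matrix.toEuclideanLin A⁻¹ v with hw
  have hAw : Matrix.toEuclideanLin A w = v := by
    have hu : IsUnit A.det := hA.det_pos.ne'.isUnit
    rw [hw, ← LinearMap.comp_apply, ← Matrix.toLpLin_mul, Matrix.mul_nonsing_inv _ hu]
    simp
  have hpos := Matrix.isPositive_toEuclideanLin_iff.2 hA.posSemidef
  have h0 := hpos.inner_nonneg_right (w - s⁻¹ • v)
  have hsymm : ⟪w, Matrix.toEuclideanLin A v⟫ = ‖v‖ ^ 2 := by
    rw [← hpos.isSymmetric w v, hAw, real_inner_self_eq_norm_sq]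
  have hle : ⟪v, Matrix.toEuclideanLin A v⟫ ≤ s * ‖v‖ ^ 2 := by
    have h1 : ‖Matrix.toEuclideanLin A v‖ ≤ s * ‖v‖ :=
      ((LinearMap.toContinuousLinearMap (Matrix.toEuclideanLin A)).le_opNorm v).trans
        (mul_le_mul_of_nonneg_right hAs (norm_nonneg v))
    calc _ ≤ ‖v‖ * ‖Matrix.toEuclideanLin A v‖ := real_inner_le_norm _ _
      _ ≤ ‖v‖ * (s * ‖v‖) := by gcongr
      _ = _ := by ring
  rw [map_sub, map_smul, hAw, inner_sub_left, inner_sub_right, inner_sub_right,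
    real_inner_smul_left, real_inner_smul_left, real_inner_smul_right, real_inner_smul_right,
    hsymm, real_inner_self_eq_norm_sq, real_inner_comm v w] at h0
  have h2 : s⁻¹ * (s⁻¹ * ⟪v, Matrix.toEuclideanLin A v⟫) ≤ s⁻¹ * ‖v‖ ^ 2 := by
    have := mul_le_mul_of_nonneg_left hle (by positivity : 0 ≤ s⁻¹ * s⁻¹)
    calc _ ≤ s⁻¹ * s⁻¹ * (s * ‖v‖ ^ 2) := by rw [← mul_assoc]; exact this
      _ = _ := by field_simp
  rw [div_eq_inv_mul]
  linarith

/-- The value of the Gaussian integral `∫ exp (-q(x - μ) / 4)`, where `q` is the quadratic form of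
the inverse of a positive definite matrix. -/
lemma Matrix.PosDef.integral_exp_neg_inner_inv {d : ℕ} {A : Matrix (Fin d) (Fin d) ℝ}
    (hA : A.PosDef) (μ : EuclideanSpace ℝ (Fin d)) :
    ∫ x : EuclideanSpace ℝ (Fin d),
      Real.exp (-⟪x - μ, Matrix.toEuclideanLin A⁻¹ (x - μ)⟫ / 4) =
        √A.det * (4 * π) ^ ((d : ℝ) / 2) := by
  obtain ⟨B, hB⟩ : ∃ B : Matrix (Fin d) (Fin d) ℝ, A⁻¹ = B.conjTranspose * B := by
    open scoped MatrixOrder in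
    exact (CStarAlgebra.nonneg_iff_eq_star_mul_self (a := A⁻¹)).1 hA.inv.posSemidef.nonneg
  have hdet : A.det⁻¹ = B.det ^ 2 := by
    rw [← Ring.inverse_eq_inv', ← Matrix.det_nonsing_inv, hB, Matrix.det_mul,
      Matrix.det_conjTranspose, star_trivial, sq]
  have hB0 : B.det ≠ 0 := by
    intro h
    have := inv_pos.2 hA.det_pos
    simp [hdet, h] at this
  have hBdet : |B.det⁻¹| = √A.det := by
    rw [← Real.sqrt_sq_eq_abs, inv_pow, ← hdet, inv_inv]
  set T := Matrix.toEuclideanLin B with hT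
  have hTdet : LinearMap.det T = B.det := by
    rw [hT, Matrix.toEuclideanLin_eq_toLin_orthonormal, LinearMap.det_toLin]
  have hq (v : EuclideanSpace ℝ (Fin d)) : ⟪v, Matrix.toEuclideanLin A⁻¹ v⟫ = ‖T v‖ ^ 2 := by
    rw [hB, Matrix.toLpLin_mul_same, LinearMap.comp_apply,
      Matrix.toEuclideanLin_conjTranspose_eq_adjoint, LinearMap.adjoint_inner_right,
      real_inner_self_eq_norm_sq]
  rw [integral_sub_right_eq_self
    (fun v => Real.exp (-⟪v, Matrix.toEuclideanLin A⁻¹ v⟫ / 4)) μ]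
  calc _ = ∫ v, Real.exp (-(1 / 4) * ‖T v‖ ^ 2) := by
        congr 1 with v
        rw [hq]
        ring_nf
    _ = ∫ w, Real.exp (-(1 / 4) * ‖w‖ ^ 2) ∂(Measure.map T volume) := by
        rw [integral_map T.continuous_of_finiteDimensional.aemeasurable]
        exact Continuous.aestronglyMeasurable (by fun_prop)
    _ = _ := by
        rw [Measure.map_linearMap_addHaar_eq_smul_addHaar _ (hTdet ▸ hB0), integral_smul_measure,
          GaussianFourier.integral_rexp_neg_mul_sq_norm (by norm_num), hTdet,
          ENNReal.toReal_ofReal (abs_nonneg _), hBdet, finrank_euclideanSpace_fin, smul_eq_mul]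
        congr 2
        ring

/-- Half of the Gaussian exponent absorbs `exp r` away from the origin, at the price of a factor
linear in the variance. -/
lemma exp_sub_sq_div_le {r s : ℝ} (hs : 0 < s) (hs6 : s ≤ 1 / 6) (hr : 1 / 3 ≤ r) :
    Real.exp (r - r ^ 2 / s / 4) ≤ 72 * Real.exp 1 * s := by
  have hr2 : 1 / (72 * s) ≤ r ^ 2 / (8 * s) := by
    rw [div_le_div_iff₀ (by positivity) (by positivity)]
    nlinarith [mul_le_mul_of_nonneg_left (pow_le_pow_left₀ (by norm_num) hr 2) hs.le]
  have hamgm : r ≤ 2 * s + r ^ 2 / (8 * s) := by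
    have : 2 * s + r ^ 2 / (8 * s) - r = (r - 4 * s) ^ 2 / (8 * s) := by field_simp; ring
    have : 0 ≤ (r - 4 * s) ^ 2 / (8 * s) := by positivity
    linarith
  have hsplit : r ^ 2 / s / 4 = r ^ 2 / (8 * s) + r ^ 2 / (8 * s) := by field_simp; norm_num
  have hexp : Real.exp (-(1 / (72 * s))) ≤ 72 * s := by
    rw [Real.exp_neg]
    refine inv_le_of_inv_le₀ (by positivity) ?_
    rw [← one_div]
    linarith [Real.add_one_le_exp (1 / (72 * s))]
  calc _ ≤ Real.exp (1 + -(1 / (72 * s))) := Real.exp_le_exp.2 (by linarith)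
    _ = Real.exp 1 * Real.exp (-(1 / (72 * s))) := Real.exp_add _ _
    _ ≤ Real.exp 1 * (72 * s) := by gcongr
    _ = _ := by ring

/-- Tail bound for the exponential of the norm under a Gaussian measure. -/
lemma setIntegral_exp_norm_gaussianMeasure_le {d : ℕ} {A : Matrix (Fin d) (Fin d) ℝ}
    (hA : A.PosDef) {s : ℝ} (hs : 0 < s) (hs6 : s ≤ 1 / 6) (hAs : matOpNorm A ≤ s)
    (μ : EuclideanSpace ℝ (Fin d)) :
    ∫ x in {y : EuclideanSpace ℝ (Fin d) | 1 / 3 ≤ ‖y - μ‖},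
        Real.exp ‖x‖ ∂(gaussianMeasure μ A) ≤
      72 * Real.exp 1 * s * Real.exp ‖μ‖ *
        (√((2 * π) ^ d)⁻¹ * (4 * π) ^ ((d : ℝ) / 2)) := by
  have hdet := hA.det_pos
  have hcont : Continuous fun v : EuclideanSpace ℝ (Fin d) => Matrix.toEuclideanLin A⁻¹ v :=
    LinearMap.continuous_of_finiteDimensional _
  have hmeas : MeasurableSet {y : EuclideanSpace ℝ (Fin d) | 1 / 3 ≤ ‖y - μ‖} :=
    measurableSet_le (by fun_prop) (by fun_prop)
  set c := √((2 * π) ^ d * A.det)⁻¹ with hc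
  have hc0 : 0 ≤ c := Real.sqrt_nonneg _
  set K := 72 * Real.exp 1 * s * Real.exp ‖μ‖ with hK
  have hK0 : 0 ≤ K := by positivity
  have hint := hA.integral_exp_neg_inner_inv μ
  have hgint : Integrable fun x : EuclideanSpace ℝ (Fin d) =>
      K * c * Real.exp (-⟪x - μ, Matrix.toEuclideanLin A⁻¹ (x - μ)⟫ / 4) := by
    refine (Integrable.of_integral_ne_zero ?_).const_mul _
    rw [hint]
    positivity
  unfold gaussianMeasure
  rw [setIntegral_withDensity_eq_setIntegral_toReal_smul
    (by fun_prop) (.of_forall fun _ => ENNReal.ofReal_lt_top) _ hmeas]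
  calc _ ≤ ∫ x in {y : EuclideanSpace ℝ (Fin d) | 1 / 3 ≤ ‖y - μ‖},
        K * c * Real.exp (-⟪x - μ, Matrix.toEuclideanLin A⁻¹ (x - μ)⟫ / 4) := by
        refine integral_mono_of_nonneg (.of_forall fun x => by positivity) hgint.integrableOn ?_
        filter_upwards [ae_restrict_mem hmeas] with x hx
        have hq := hA.norm_sq_div_le_inner_inv hs hAs (x - μ)
        set q := ⟪x - μ, Matrix.toEuclideanLin A⁻¹ (x - μ)⟫
        have hnorm : ‖x‖ ≤ ‖μ‖ + ‖x - μ‖ := norm_le_norm_add_norm_sub' x μ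
        rw [ENNReal.toReal_ofReal (by positivity), smul_eq_mul]
        calc c * Real.exp (-q / 2) * Real.exp ‖x‖
            = c * Real.exp (-q / 2 + ‖x‖) := by rw [mul_assoc, ← Real.exp_add]
          _ ≤ c * Real.exp ((‖x - μ‖ - ‖x - μ‖ ^ 2 / s / 4) + ‖μ‖ + -q / 4) :=
              mul_le_mul_of_nonneg_left (Real.exp_le_exp.2 (by linarith)) hc0
          _ = c * (Real.exp (‖x - μ‖ - ‖x - μ‖ ^ 2 / s / 4) * Real.exp ‖μ‖ *
                Real.exp (-q / 4)) := by rw [Real.exp_add, Real.exp_add]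
          _ ≤ c * (72 * Real.exp 1 * s * Real.exp ‖μ‖ * Real.exp (-q / 4)) := by
              gcongr
              exact exp_sub_sq_div_le hs hs6 hx
          _ = K * c * Real.exp (-q / 4) := by rw [hK]; ring
    _ ≤ ∫ x, K * c * Real.exp (-⟪x - μ, Matrix.toEuclideanLin A⁻¹ (x - μ)⟫ / 4) :=
        setIntegral_le_integral hgint (.of_forall fun x => by positivity)
    _ = K * (√((2 * π) ^ d)⁻¹ * (4 * π) ^ ((d : ℝ) / 2)) := by
        have hcdet : c * √A.det = √((2 * π) ^ d)⁻¹ := by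
          rw [hc, ← Real.sqrt_mul (by positivity)]
          congr 1
          field_simp
        rw [integral_const_mul, hint, ← hcdet]
        ring

theorem stmt0 (d : ℕ) (hd : 1 ≤ d) (M : ℝ) (hM : 0 < M) :
    ∃ C > 0, ∀ (μ : EuclideanSpace ℝ (Fin d)) (η : ℝ) (Γ : Matrix (Fin d) (Fin d) ℝ),
      0 < η → Γ.IsSymm → Γ.PosDef → matOpNorm Γ ≤ M → η * matOpNorm Γ ≤ 1 / 6 →
      ∫ x in {y : EuclideanSpace ℝ (Fin d) | 1 / 3 ≤ ‖y - μ‖},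
          Real.exp ‖x‖ ∂(gaussianMeasure μ (η • Γ)) ≤ C * η * Real.exp ‖μ‖ := by
  refine ⟨72 * Real.exp 1 * M * (√((2 * π) ^ d)⁻¹ * (4 * π) ^ ((d : ℝ) / 2)), by positivity, ?_⟩
  intro μ η Γ hη _ hΓ hΓM hηΓ
  have hnorm : matOpNorm (η • Γ) = η * matOpNorm Γ := by
    simp [matOpNorm, norm_smul, abs_of_pos hη]
  have hs : 0 < min (η * M) (1 / 6) := lt_min (by positivity) (by norm_num)
  have hle : matOpNorm (η • Γ) ≤ min (η * M) (1 / 6) := by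
    rw [hnorm]
    exact le_min (by gcongr) hηΓ
  calc _ ≤ 72 * Real.exp 1 * min (η * M) (1 / 6) * Real.exp ‖μ‖ *
        (√((2 * π) ^ d)⁻¹ * (4 * π) ^ ((d : ℝ) / 2)) :=
        setIntegral_exp_norm_gaussianMeasure_le (hΓ.smul hη) hs (min_le_right _ _) hle μ
    _ ≤ 72 * Real.exp 1 * (η * M) * Real.exp ‖μ‖ *
        (√((2 * π) ^ d)⁻¹ * (4 * π) ^ ((d : ℝ) / 2)) := by
        gcongr
        exact min_le_left _ _
    _ = _ := by ring
end

section
/- For every dimension d ≥ 1 and every M > 0 there exists a constant C > 0, depending only on d and M, such that the following holds: for every μ ∈ ℝ^d with |μ| ≥ 2/3, every η > 0, and every symmetric positive definite matrix Σ ∈ ℝ^{d×d} with ‖Σ‖_op ≤ M and η‖Σ‖_op ≤ 1/6, if ξ is a random vector with the Gaussian distribution N(μ, ηΣ), then E[ e^{|ξ|} · 1_{{|ξ−μ| < 1/3}} ] ≤ e^{|μ| + Cη}. -/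
open MeasureTheory Real
open scoped RealInnerProductSpace

/-- The norm lies below the quadratic expansion of `√` at a nonzero point. -/
lemma norm_add_le_quadratic {E : Type*} [NormedAddCommGroup E] [InnerProductSpace ℝ E]
    {μ : E} (hμ : 0 < ‖μ‖) (z : E) :
    ‖μ + z‖ ≤ ‖μ‖ + ⟪‖μ‖⁻¹ • μ, z⟫ + ‖z‖ ^ 2 / (2 * ‖μ‖) := by
  have h := norm_add_sq_real μ z
  have e : ‖μ‖ + ⟪‖μ‖⁻¹ • μ, z⟫ + ‖z‖ ^ 2 / (2 * ‖μ‖)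
      = (‖μ + z‖ ^ 2 + ‖μ‖ ^ 2) / (2 * ‖μ‖) := by
    rw [h, real_inner_smul_left]
    field_simp
    ring
  rw [e, le_div_iff₀ (by positivity)]
  nlinarith [sq_nonneg (‖μ + z‖ - ‖μ‖)]

lemma exp_neg_mul_sq_add_mul_eq {a : ℝ} (ha : 0 < a) (c t : ℝ) :
    exp (-a * t ^ 2 + c * t) = exp (-a * (t - c / (2 * a)) ^ 2) * exp (c ^ 2 / (4 * a)) := by
  rw [← exp_add]
  congr 1
  field_simp
  ring

lemma integrable_exp_neg_mul_sq_add_mul {a : ℝ} (ha : 0 < a) (c : ℝ) :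
    Integrable fun t : ℝ => exp (-a * t ^ 2 + c * t) := by
  simp_rw [exp_neg_mul_sq_add_mul_eq ha c]
  exact ((integrable_exp_neg_mul_sq ha).comp_sub_right (c / (2 * a))).mul_const _

lemma integral_exp_neg_mul_sq_add_mul {a : ℝ} (ha : 0 < a) (c : ℝ) :
    ∫ t : ℝ, exp (-a * t ^ 2 + c * t) = √(π / a) * exp (c ^ 2 / (4 * a)) := by
  simp_rw [exp_neg_mul_sq_add_mul_eq ha c]
  rw [integral_mul_const, integral_sub_right_eq_self fun t : ℝ => exp (-a * t ^ 2),
    integral_gaussian]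

/-- One-dimensional estimate: the Gaussian of variance `v ≤ 1/6` integrates
`exp (c t + 3 t² / 4)` to at most `exp (5 v / 3)` when `|c| ≤ 1`. -/
lemma gaussian_integral_exp_quadratic_le {v c : ℝ} (hv : 0 < v) (hv' : v ≤ 1 / 6)
    (hc : c ^ 2 ≤ 1) :
    (√(2 * π * v))⁻¹ * ∫ t : ℝ, exp (-((2 * v)⁻¹ - 3 / 4) * t ^ 2 + c * t)
      ≤ exp (5 / 3 * v) := by
  have hq : 0 < 1 - 3 / 2 * v := by linarith
  have ha_eq : (2 * v)⁻¹ - 3 / 4 = (1 - 3 / 2 * v) / (2 * v) := by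
    field_simp
    ring
  have ha : 0 < (2 * v)⁻¹ - 3 / 4 := by rw [ha_eq]; positivity
  rw [integral_exp_neg_mul_sq_add_mul ha, ← mul_assoc, ← sqrt_inv, ← sqrt_mul (by positivity),
    ha_eq]
  have e1 : (2 * π * v)⁻¹ * (π / ((1 - 3 / 2 * v) / (2 * v))) = (1 - 3 / 2 * v)⁻¹ := by
    have := pi_pos
    field_simp
  have h1 : √((1 - 3 / 2 * v)⁻¹) ≤ exp v := by
    refine sqrt_le_iff.2 ⟨(exp_pos v).le, ?_⟩
    rw [← exp_nat_mul]
    refine le_trans ?_ (add_one_le_exp _)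
    rw [inv_le_iff_one_le_mul₀ hq]
    push_cast
    nlinarith
  have h2 : c ^ 2 / (4 * ((1 - 3 / 2 * v) / (2 * v))) ≤ 2 / 3 * v := by
    rw [div_le_iff₀ (by positivity)]
    have : 2 / 3 * v * (4 * ((1 - 3 / 2 * v) / (2 * v))) = 4 / 3 * (1 - 3 / 2 * v) := by
      field_simp
    rw [this]
    linarith
  rw [e1]
  calc √((1 - 3 / 2 * v)⁻¹) * exp (c ^ 2 / (4 * ((1 - 3 / 2 * v) / (2 * v))))
      ≤ exp v * exp (2 / 3 * v) := by gcongr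
    _ = exp (5 / 3 * v) := by rw [← exp_add]; ring_nf

section Spectral

variable {d : ℕ} {S : Matrix (Fin d) (Fin d) ℝ}

lemma toEuclideanLin_eigenvectorBasis (hS : S.IsHermitian) (i : Fin d) :
    Matrix.toEuclideanLin S (hS.eigenvectorBasis i)
      = hS.eigenvalues i • hS.eigenvectorBasis i := by
  rw [Matrix.toLpLin_apply, hS.mulVec_eigenvectorBasis]
  rfl

lemma eigenvalues_le_matOpNorm (hS : S.IsHermitian) (i : Fin d) :
    hS.eigenvalues i ≤ matOpNorm S := by
  have h := (LinearMap.toContinuousLinearMap (Matrix.toEuclideanLin S)).le_opNorm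
    (hS.eigenvectorBasis i)
  rw [LinearMap.coe_toContinuousLinearMap', toEuclideanLin_eigenvectorBasis hS, norm_smul,
    hS.eigenvectorBasis.orthonormal.1 i, mul_one, mul_one] at h
  exact (le_abs_self _).trans h

lemma toEuclideanLin_inv_eigenvectorBasis (hS : S.PosDef) (i : Fin d) :
    Matrix.toEuclideanLin S⁻¹ (hS.1.eigenvectorBasis i)
      = (hS.1.eigenvalues i)⁻¹ • hS.1.eigenvectorBasis i := by
  have h : Matrix.toEuclideanLin S⁻¹ (Matrix.toEuclideanLin S (hS.1.eigenvectorBasis i))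
      = hS.1.eigenvectorBasis i := by
    rw [← LinearMap.comp_apply, ← Matrix.toLpLin_mul_same,
      Matrix.nonsing_inv_mul _ hS.det_pos.ne'.isUnit, Matrix.toLpLin_one, LinearMap.id_apply]
  rw [toEuclideanLin_eigenvectorBasis hS.1, map_smul] at h
  rw [eq_inv_smul_iff₀ (hS.eigenvalues_pos i).ne', h]

lemma inner_toEuclideanLin_inv_self (hS : S.PosDef) (z : EuclideanSpace ℝ (Fin d)) :
    ⟪z, Matrix.toEuclideanLin S⁻¹ z⟫
      = ∑ i, (hS.1.eigenvalues i)⁻¹ * (hS.1.eigenvectorBasis.repr z i) ^ 2 := by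
  rw [← hS.1.eigenvectorBasis.sum_inner_mul_inner z]
  refine Finset.sum_congr rfl fun i _ => ?_
  rw [← (Matrix.isSymmetric_toEuclideanLin_iff.2 hS.1.inv) (hS.1.eigenvectorBasis i) z,
    toEuclideanLin_inv_eigenvectorBasis hS, real_inner_smul_left,
    hS.1.eigenvectorBasis.repr_apply_apply, real_inner_comm]
  ring

end Spectral

section Coordinates

variable {d : ℕ} (b : OrthonormalBasis (Fin d) ℝ (EuclideanSpace ℝ (Fin d)))
  (μ : EuclideanSpace ℝ (Fin d)) (f : Fin d → ℝ → ℝ)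

lemma measurePreserving_repr_sub :
    MeasurePreserving fun (x : EuclideanSpace ℝ (Fin d)) i => b.repr (x - μ) i :=
  (PiLp.volume_preserving_ofLp (Fin d)).comp
    (b.measurePreserving_repr.comp (measurePreserving_sub_right volume μ))

lemma measurableEmbedding_repr_sub :
    MeasurableEmbedding fun (x : EuclideanSpace ℝ (Fin d)) i => b.repr (x - μ) i :=
  (MeasurableEquiv.toLp 2 (Fin d → ℝ)).symm.measurableEmbedding.comp
    (b.repr.toHomeomorph.measurableEmbedding.comp (measurableEmbedding_subRight μ))

lemma integrable_prod_repr_sub (hf : ∀ i, Integrable (f i)) :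
    Integrable fun x : EuclideanSpace ℝ (Fin d) => ∏ i, f i (b.repr (x - μ) i) :=
  ((measurePreserving_repr_sub b μ).integrable_comp_emb (measurableEmbedding_repr_sub b μ)).2
    (Integrable.fintype_prod hf)

lemma integral_prod_repr_sub :
    ∫ x : EuclideanSpace ℝ (Fin d), ∏ i, f i (b.repr (x - μ) i) = ∏ i, ∫ t, f i t := by
  rw [← integral_fintype_prod_volume_eq_prod]
  exact (measurePreserving_repr_sub b μ).integral_comp (measurableEmbedding_repr_sub b μ)
    fun y : Fin d → ℝ => ∏ i, f i (y i)

end Coordinates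

/-- Exponential moment of the norm under a Gaussian with small covariance, localized near
the mean. -/
lemma setIntegral_exp_norm_gaussianMeasure_le_s1 {d : ℕ} {μ : EuclideanSpace ℝ (Fin d)}
    {S : Matrix (Fin d) (Fin d) ℝ} (hμ : 2 / 3 ≤ ‖μ‖) (hS : S.PosDef)
    (hS' : matOpNorm S ≤ 1 / 6) {s : Set (EuclideanSpace ℝ (Fin d))} (hs : MeasurableSet s) :
    ∫ x in s, exp ‖x‖ ∂(gaussianMeasure μ S) ≤ exp (‖μ‖ + 5 / 3 * d * matOpNorm S) := by
  have hμ0 : 0 < ‖μ‖ := by linarith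
  set b := hS.1.eigenvectorBasis
  set v := hS.1.eigenvalues with hv
  have hv0 : ∀ i, 0 < v i := hS.eigenvalues_pos
  have hvS : ∀ i, v i ≤ matOpNorm S := eigenvalues_le_matOpNorm hS.1
  set u := ‖μ‖⁻¹ • μ with hu
  have hu1 : ‖u‖ = 1 := by
    rw [hu, norm_smul, norm_inv, norm_norm, inv_mul_cancel₀ hμ0.ne']
  set c : Fin d → ℝ := fun i => b.repr u i with hc
  have hc1 : ∀ i, c i ^ 2 ≤ 1 := fun i => by
    have h := abs_real_inner_le_norm (b i) u
    rw [b.orthonormal.1 i, hu1, mul_one] at h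
    rw [hc]
    simp only [b.repr_apply_apply]
    exact (sq_le_one_iff_abs_le_one _).2 h
  set f : Fin d → ℝ → ℝ := fun i t => exp (-((2 * v i)⁻¹ - 3 / 4) * t ^ 2 + c i * t) with hf
  have hfint : ∀ i, Integrable (f i) := fun i => by
    refine integrable_exp_neg_mul_sq_add_mul ?_ (c i)
    have : (1 / 3 : ℝ)⁻¹ ≤ (2 * v i)⁻¹ :=
      inv_anti₀ (by linarith [hv0 i]) (by linarith [hvS i])
    norm_num at this ⊢
    linarith
  set K : ℝ := √(((2 * π) ^ d * S.det))⁻¹ with hK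
  have hK_eq : K = ∏ i, (√(2 * π * v i))⁻¹ := by
    have : (2 * π) ^ d * S.det = ∏ i, (2 * π * v i) := by
      rw [Finset.prod_mul_distrib, hS.1.det_eq_prod_eigenvalues]
      simp [hv]
    rw [hK, this, sqrt_inv, Finset.prod_inv_distrib, sqrt_prod]
    exact fun i _ => by have := hv0 i; positivity
  have hbound : ∀ x : EuclideanSpace ℝ (Fin d),
      K * exp (-⟪x - μ, Matrix.toEuclideanLin S⁻¹ (x - μ)⟫ / 2) * exp ‖x‖
        ≤ K * exp ‖μ‖ * ∏ i, f i (b.repr (x - μ) i) := fun x => by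
    have hn := norm_add_le_quadratic hμ0 (x - μ)
    rw [add_sub_cancel] at hn
    have hsq : ‖x - μ‖ ^ 2 = ∑ i, (b.repr (x - μ) i) ^ 2 := by
      rw [← b.repr.norm_map, EuclideanSpace.real_norm_sq_eq]
    have hin : ⟪u, x - μ⟫ = ∑ i, c i * b.repr (x - μ) i := by
      rw [← b.repr.inner_map_map, PiLp.inner_apply]
      refine Finset.sum_congr rfl fun i _ => ?_
      simp [hc, mul_comm]
    have h34 : ‖x - μ‖ ^ 2 / (2 * ‖μ‖) ≤ 3 / 4 * ‖x - μ‖ ^ 2 := by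
      rw [div_le_iff₀ (by positivity)]
      nlinarith [sq_nonneg ‖x - μ‖]
    rw [mul_assoc, mul_assoc, ← exp_add, hf, ← exp_sum, ← exp_add]
    refine mul_le_mul_of_nonneg_left (exp_le_exp.2 ?_) (sqrt_nonneg _)
    have hsum : ∑ i, (-((2 * v i)⁻¹ - 3 / 4) * (b.repr (x - μ) i) ^ 2 + c i * b.repr (x - μ) i)
        = -(∑ i, (v i)⁻¹ * (b.repr (x - μ) i) ^ 2) / 2
          + 3 / 4 * ∑ i, (b.repr (x - μ) i) ^ 2 + ∑ i, c i * b.repr (x - μ) i := by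
      rw [neg_div, Finset.sum_div, ← Finset.sum_neg_distrib, Finset.mul_sum,
        ← Finset.sum_add_distrib, ← Finset.sum_add_distrib]
      refine Finset.sum_congr rfl fun i _ => ?_
      rw [mul_inv]
      ring
    rw [hsum, inner_toEuclideanLin_inv_self hS, ← hsq, ← hin]
    linarith
  have hdens : Continuous fun x : EuclideanSpace ℝ (Fin d) =>
      K * exp (-⟪x - μ, Matrix.toEuclideanLin S⁻¹ (x - μ)⟫ / 2) := by
    have : Continuous (Matrix.toEuclideanLin S⁻¹) := LinearMap.continuous_of_finiteDimensional _
    fun_prop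
  have hGint : Integrable fun x : EuclideanSpace ℝ (Fin d) =>
      K * exp ‖μ‖ * ∏ i, f i (b.repr (x - μ) i) :=
    (integrable_prod_repr_sub b μ f hfint).const_mul _
  have hK0 : 0 ≤ K := sqrt_nonneg _
  have hf0 : ∀ i t, 0 ≤ f i t := fun i t => (exp_pos _).le
  rw [gaussianMeasure, setIntegral_withDensity_eq_setIntegral_toReal_smul
    hdens.measurable.ennreal_ofReal (by simp) _ hs]
  calc ∫ x in s, (ENNReal.ofReal
          (K * exp (-⟪x - μ, Matrix.toEuclideanLin S⁻¹ (x - μ)⟫ / 2))).toReal • exp ‖x‖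
      = ∫ x in s, K * exp (-⟪x - μ, Matrix.toEuclideanLin S⁻¹ (x - μ)⟫ / 2) * exp ‖x‖ := by
        congr 1 with x
        rw [ENNReal.toReal_ofReal (by positivity), smul_eq_mul]
    _ ≤ ∫ x in s, K * exp ‖μ‖ * ∏ i, f i (b.repr (x - μ) i) :=
        integral_mono_of_nonneg (Filter.Eventually.of_forall fun x => by positivity)
          hGint.integrableOn (Filter.Eventually.of_forall hbound)
    _ ≤ ∫ x, K * exp ‖μ‖ * ∏ i, f i (b.repr (x - μ) i) :=
        setIntegral_le_integral hGint (Filter.Eventually.of_forall fun x =>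
          mul_nonneg (by positivity) (Finset.prod_nonneg fun i _ => hf0 i _))
    _ = exp ‖μ‖ * ∏ i, ((√(2 * π * v i))⁻¹ * ∫ t, f i t) := by
        rw [integral_const_mul, integral_prod_repr_sub, Finset.prod_mul_distrib, ← hK_eq]
        ring
    _ ≤ exp ‖μ‖ * ∏ _i : Fin d, exp (5 / 3 * matOpNorm S) := by
        refine mul_le_mul_of_nonneg_left (Finset.prod_le_prod (fun i _ =>
          mul_nonneg (by positivity) (integral_nonneg (hf0 i))) fun i _ => ?_) (exp_pos _).le
        refine (gaussian_integral_exp_quadratic_le (hv0 i) ((hvS i).trans hS') (hc1 i)).trans ?_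
        exact exp_le_exp.2 (by linarith [hvS i])
    _ = exp (‖μ‖ + 5 / 3 * d * matOpNorm S) := by
        rw [Finset.prod_const, Finset.card_univ, Fintype.card_fin, ← exp_nat_mul, ← exp_add]
        ring_nf

lemma matOpNorm_smul {d : ℕ} {η : ℝ} (hη : 0 ≤ η) (A : Matrix (Fin d) (Fin d) ℝ) :
    matOpNorm (η • A) = η * matOpNorm A := by
  rw [matOpNorm, map_smul, map_smul, norm_smul, Real.norm_of_nonneg hη, matOpNorm]

theorem stmt1 (d : ℕ) (hd : 1 ≤ d) (M : ℝ) (hM : 0 < M) :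
    ∃ C > 0, ∀ (μ : EuclideanSpace ℝ (Fin d)) (η : ℝ) (Γ : Matrix (Fin d) (Fin d) ℝ),
      2 / 3 ≤ ‖μ‖ → 0 < η → Γ.IsSymm → Γ.PosDef → matOpNorm Γ ≤ M →
      η * matOpNorm Γ ≤ 1 / 6 →
      ∫ x in {y : EuclideanSpace ℝ (Fin d) | ‖y - μ‖ < 1 / 3},
          Real.exp ‖x‖ ∂(gaussianMeasure μ (η • Γ)) ≤ Real.exp (‖μ‖ + C * η) := by
  have hd0 : (0 : ℝ) < d := by exact_mod_cast hd
  refine ⟨5 / 3 * d * M, by positivity, fun μ η Γ hμ hη _ hΓ hΓM hηΓ => ?_⟩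
  have hs : MeasurableSet {y : EuclideanSpace ℝ (Fin d) | ‖y - μ‖ < 1 / 3} :=
    (isOpen_lt (by fun_prop) continuous_const).measurableSet
  rw [← matOpNorm_smul hη.le] at hηΓ
  refine (setIntegral_exp_norm_gaussianMeasure_le_s1 hμ (hΓ.smul hη) hηΓ hs).trans ?_
  rw [matOpNorm_smul hη.le, exp_le_exp]
  have : 5 / 3 * d * (η * matOpNorm Γ) ≤ 5 / 3 * d * (η * M) := by gcongr
  linarith
end

section
/- Define U : ℝ^d → ℝ by U(x) = e^{3|x|} if |x| ≥ 1/3 and U(x) = 9e|x|² if |x| < 1/3. Suppose the drift assumption and the diffusion assumption hold, and fix α ∈ (0, 1/2). Then there exist constants C > 0, λ' > 0 and η̄ > 0 such that for every x ∈ ℝ^d and every η ∈ (0, η̄], if ξ is a random vector with Gaussian distribution N( x + η b(x)/(1 + η^α ‖∇b(x)‖_op), η σ(x)σ(x)^T ), then E[U(ξ)] ≤ e^{−λ' η} U(x) + C η. -/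
open MeasureTheory Real
open scoped RealInnerProductSpace

/-- The Lyapunov function `U(x) = e^{3|x|}` for `|x| ≥ 1/3` and `U(x) = 9e|x|²`
for `|x| < 1/3`. -/
noncomputable def Ufun {d : ℕ} (x : EuclideanSpace ℝ (Fin d)) : ℝ :=
  if 1 / 3 ≤ ‖x‖ then Real.exp (3 * ‖x‖) else 9 * Real.exp 1 * ‖x‖ ^ 2

section Gaussian

variable {d : ℕ}

lemma integral_exp_neg_mul_sq_norm_add_inner {b : ℝ} (hb : 0 < b)
    (w : EuclideanSpace ℝ (Fin d)) :
    Integrable (fun z : EuclideanSpace ℝ (Fin d) => rexp (-b * ‖z‖ ^ 2 + ⟪w, z⟫)) ∧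
    ∫ z : EuclideanSpace ℝ (Fin d), rexp (-b * ‖z‖ ^ 2 + ⟪w, z⟫) =
      (π / b) ^ ((d : ℝ) / 2) * rexp (‖w‖ ^ 2 / (4 * b)) := by
  have hb' : 0 < (b : ℂ).re := hb
  have hcast : (fun z : EuclideanSpace ℝ (Fin d) =>
      Complex.exp (-(b : ℂ) * ‖z‖ ^ 2 + (1 : ℂ) * (⟪w, z⟫ : ℝ))) =
      fun z => ((rexp (-b * ‖z‖ ^ 2 + ⟪w, z⟫) : ℝ) : ℂ) := by
    funext z; push_cast; simp
  have hint := GaussianFourier.integrable_cexp_neg_mul_sq_norm_add hb' 1 w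
  have hval := GaussianFourier.integral_cexp_neg_mul_sq_norm_add hb' 1 w
  rw [hcast] at hint hval
  refine ⟨by simpa only [RCLike.re_eq_complex_re, Complex.ofReal_re] using hint.re, ?_⟩
  rw [integral_complex_ofReal] at hval
  rw [← Complex.ofReal_inj, hval, Complex.ofReal_mul, Complex.ofReal_cpow (by positivity)]
  push_cast
  simp

lemma measurable_gaussianDensity (μ : EuclideanSpace ℝ (Fin d)) (Γ : Matrix (Fin d) (Fin d) ℝ) :
    Measurable fun x : EuclideanSpace ℝ (Fin d) =>
      ENNReal.ofReal (Real.sqrt (((2 * π) ^ d * Γ.det))⁻¹ *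
        Real.exp (-⟪x - μ, Matrix.toEuclideanLin Γ⁻¹ (x - μ)⟫ / 2)) := by
  have : Continuous fun x => Matrix.toEuclideanLin Γ⁻¹ (x - μ) :=
    (LinearMap.continuous_of_finiteDimensional _).comp (by fun_prop)
  exact (ENNReal.continuous_ofReal.comp (by fun_prop)).measurable

lemma inner_toEuclideanLin_inv_mul_transpose {A : Matrix (Fin d) (Fin d) ℝ} (hA : IsUnit A)
    (z : EuclideanSpace ℝ (Fin d)) :
    ⟪Matrix.toEuclideanLin A z,
      Matrix.toEuclideanLin (A * A.transpose)⁻¹ (Matrix.toEuclideanLin A z)⟫ = ‖z‖ ^ 2 := by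
  have hdet : IsUnit A.det := (Matrix.isUnit_iff_isUnit_det A).1 hA
  have hadj : LinearMap.adjoint (Matrix.toEuclideanLin A) = Matrix.toEuclideanLin A.transpose := by
    rw [← Matrix.toEuclideanLin_conjTranspose_eq_adjoint,
      Matrix.conjTranspose_eq_transpose_of_trivial]
  rw [← LinearMap.adjoint_inner_right, hadj, ← LinearMap.comp_apply, ← LinearMap.comp_apply,
    ← Matrix.toLpLin_mul_same, ← Matrix.toLpLin_mul_same, Matrix.mul_inv_rev]
  have : A.transpose * (A.transpose⁻¹ * A⁻¹) * A = 1 := by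
    rw [← Matrix.mul_assoc, Matrix.mul_nonsing_inv _ (by simpa using hdet), Matrix.one_mul,
      Matrix.nonsing_inv_mul _ hdet]
  simp only [← Matrix.mul_assoc] at this ⊢
  rw [this]
  simp

/-- A nondegenerate Gaussian measure is the affine image of the standard one. -/
lemma gaussianMeasure_mul_transpose_eq_map (μ : EuclideanSpace ℝ (Fin d))
    {A : Matrix (Fin d) (Fin d) ℝ} (hA : IsUnit A) :
    gaussianMeasure μ (A * A.transpose) =
      (gaussianMeasure 0 1).map fun z => μ + Matrix.toEuclideanLin A z := by
  have hdet : A.det ≠ 0 := ((Matrix.isUnit_iff_isUnit_det A).1 hA).ne_zero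
  have hcont : Continuous (Matrix.toEuclideanLin A) := LinearMap.continuous_of_finiteDimensional _
  have hmeas : Measurable fun z => μ + Matrix.toEuclideanLin A z := by fun_prop
  have hdetL : LinearMap.det (Matrix.toEuclideanLin A) = A.det := LinearMap.det_toLpLin _ _
  have hmap := Measure.map_linearMap_addHaar_eq_smul_addHaar
    (volume : Measure (EuclideanSpace ℝ (Fin d))) (f := Matrix.toEuclideanLin A) (by rwa [hdetL])
  rw [hdetL] at hmap
  ext s hs
  rw [Measure.map_apply hmeas hs, gaussianMeasure, gaussianMeasure,
    withDensity_apply _ hs, withDensity_apply _ (hmeas hs), ← lintegral_indicator hs,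
    ← lintegral_indicator (hmeas hs), ← lintegral_add_left_eq_self _ μ]
  have hvol : (volume : Measure (EuclideanSpace ℝ (Fin d))) =
      ENNReal.ofReal |A.det| • volume.map (Matrix.toEuclideanLin A) := by
    rw [hmap, smul_smul, ← ENNReal.ofReal_mul (abs_nonneg _), ← abs_mul, mul_inv_cancel₀ hdet]
    simp
  conv_lhs => rw [hvol]
  have hdens := (measurable_gaussianDensity μ (A * A.transpose)).indicator hs
  rw [lintegral_smul_measure, smul_eq_mul]
  refine (congrArg _ (lintegral_map (hdens.comp (measurable_const_add μ)) hcont.measurable)).trans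
    ((lintegral_const_mul _ (hdens.comp hmeas)).symm.trans (lintegral_congr fun z => ?_))
  simp only [Function.comp_apply]
  by_cases hz : μ + Matrix.toEuclideanLin A z ∈ s
  · have hz' : z ∈ (fun z => μ + Matrix.toEuclideanLin A z) ⁻¹' s := hz
    rw [Set.indicator_of_mem hz, Set.indicator_of_mem hz',
      ← ENNReal.ofReal_mul (abs_nonneg _), add_sub_cancel_left,
      inner_toEuclideanLin_inv_mul_transpose hA, ← mul_assoc]
    congr 2
    · rw [← Real.sqrt_sq_eq_abs, ← Real.sqrt_mul (sq_nonneg _), Matrix.det_mul,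
        Matrix.det_transpose, Matrix.det_one]
      congr 1
      field_simp
    · simp
  · have hz' : z ∉ (fun z => μ + Matrix.toEuclideanLin A z) ⁻¹' s := hz
    rw [Set.indicator_of_notMem hz, Set.indicator_of_notMem hz', mul_zero]

lemma integral_exp_stdGaussian {k : ℝ} (hk : k < 1 / 2) (w : EuclideanSpace ℝ (Fin d)) :
    Integrable (fun z => rexp (⟪w, z⟫ + k * ‖z‖ ^ 2)) (gaussianMeasure 0 1) ∧
    ∫ z, rexp (⟪w, z⟫ + k * ‖z‖ ^ 2) ∂(gaussianMeasure 0 1) =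
      (1 - 2 * k)⁻¹ ^ ((d : ℝ) / 2) * rexp (‖w‖ ^ 2 / (2 * (1 - 2 * k))) := by
  obtain ⟨h1, h2⟩ := integral_exp_neg_mul_sq_norm_add_inner (b := 1 / 2 - k) (by linarith) w
  have hfin : ∀ᵐ x : EuclideanSpace ℝ (Fin d),
      ENNReal.ofReal (Real.sqrt (((2 * π) ^ d * (1 : Matrix (Fin d) (Fin d) ℝ).det))⁻¹ *
        Real.exp (-⟪x - 0, Matrix.toEuclideanLin 1⁻¹ (x - 0)⟫ / 2)) < ⊤ :=
    Filter.Eventually.of_forall fun _ => ENNReal.ofReal_lt_top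
  have hfun : (fun x : EuclideanSpace ℝ (Fin d) =>
      (ENNReal.ofReal (Real.sqrt (((2 * π) ^ d * (1 : Matrix (Fin d) (Fin d) ℝ).det))⁻¹ *
        Real.exp (-⟪x - 0, Matrix.toEuclideanLin 1⁻¹ (x - 0)⟫ / 2))).toReal •
        rexp (⟪w, x⟫ + k * ‖x‖ ^ 2)) =
      fun x => Real.sqrt ((2 * π) ^ d)⁻¹ * rexp (-(1 / 2 - k) * ‖x‖ ^ 2 + ⟪w, x⟫) := by
    funext x
    rw [ENNReal.toReal_ofReal (by positivity), smul_eq_mul, mul_assoc, ← Real.exp_add]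
    simp only [Matrix.det_one, mul_one, inv_one, sub_zero, Matrix.toLpLin_one, LinearMap.id_apply,
      real_inner_self_eq_norm_sq]
    ring_nf
  rw [gaussianMeasure, integrable_withDensity_iff_integrable_smul'
    (measurable_gaussianDensity 0 1) hfin, integral_withDensity_eq_integral_toReal_smul
    (measurable_gaussianDensity 0 1) hfin, hfun]
  refine ⟨h1.const_mul _, ?_⟩
  rw [integral_const_mul, h2, ← mul_assoc]
  have hpos : 0 < 1 - 2 * k := by linarith
  congr 1
  · rw [Real.sqrt_eq_rpow, ← inv_pow, ← Real.rpow_natCast, ← Real.rpow_mul (by positivity),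
      show (d : ℝ) * (1 / 2) = d / 2 by ring, ← Real.mul_rpow (by positivity)
        (div_nonneg pi_pos.le (by linarith))]
    congr 1
    have : (1 / 2 - k) = (1 - 2 * k) / 2 := by ring
    rw [this]
    field_simp
  · congr 2
    ring

instance isProbabilityMeasure_stdGaussian :
    IsProbabilityMeasure (gaussianMeasure (0 : EuclideanSpace ℝ (Fin d)) 1) := by
  obtain ⟨h1, h2⟩ := integral_exp_stdGaussian (d := d) (k := 0) (by norm_num) 0
  simp only [inner_zero_left, zero_mul, add_zero, Real.exp_zero, integrable_const_iff,
    one_ne_zero, false_or] at h1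
  have := h1
  rw [isProbabilityMeasure_iff_real]
  simpa using h2

lemma inv_one_sub_rpow_le_exp {t p : ℝ} (ht : 0 ≤ t) (ht' : t ≤ 1 / 2) (hp : 0 ≤ p) :
    (1 - t)⁻¹ ^ p ≤ rexp (2 * t * p) := by
  have hpos : 0 < 1 - t := by linarith
  have h : (1 - t)⁻¹ ≤ rexp (2 * t) := by
    rw [inv_le_iff_one_le_mul₀ hpos]
    nlinarith [Real.add_one_le_exp (2 * t)]
  rw [Real.exp_mul]
  exact Real.rpow_le_rpow (by positivity) h hp

/-- Exponential-quadratic moments of a small Gaussian perturbation. -/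
lemma integral_exp_gaussianMeasure_le {L η k : ℝ} (hη : 0 < η) (hk : 0 ≤ k)
    (hkη : 4 * k * η * L ^ 2 ≤ 1) {S : Matrix (Fin d) (Fin d) ℝ} (hS : IsUnit S)
    (hSL : matOpNorm S ≤ L) (m v : EuclideanSpace ℝ (Fin d)) :
    IsProbabilityMeasure (gaussianMeasure m (η • (S * S.transpose))) ∧
    Integrable (fun z => rexp (⟪v, z - m⟫ + k * ‖z - m‖ ^ 2))
      (gaussianMeasure m (η • (S * S.transpose))) ∧
    ∫ z, rexp (⟪v, z - m⟫ + k * ‖z - m‖ ^ 2) ∂(gaussianMeasure m (η • (S * S.transpose))) ≤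
      rexp (η * (2 * k * L ^ 2 * d + L ^ 2 * ‖v‖ ^ 2)) := by
  have hL : 0 ≤ L := (norm_nonneg _).trans hSL
  have hA : IsUnit (√η • S) := by
    rw [Matrix.isUnit_iff_isUnit_det, Matrix.det_smul]
    exact (isUnit_iff_ne_zero.2 (by positivity)).mul ((Matrix.isUnit_iff_isUnit_det S).1 hS)
  have hAA : η • (S * S.transpose) = (√η • S) * (√η • S).transpose := by
    rw [Matrix.transpose_smul, Matrix.smul_mul, Matrix.mul_smul, smul_smul,
      Real.mul_self_sqrt hη.le]
  set T := Matrix.toEuclideanLin (√η • S) with hT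
  have hTcont : Continuous T := LinearMap.continuous_of_finiteDimensional _
  have hmeas : Measurable fun z => m + T z := by fun_prop
  have hTS : ∀ z, T z = √η • LinearMap.toContinuousLinearMap (Matrix.toEuclideanLin S) z := by
    intro z; simp [hT]
  set S' := LinearMap.toContinuousLinearMap (Matrix.toEuclideanLin S)
  have hSL' : ‖S'‖ ≤ L := hSL
  set w := √η • ContinuousLinearMap.adjoint S' v with hw
  have hwn : ‖w‖ ^ 2 ≤ η * (L ^ 2 * ‖v‖ ^ 2) := by
    rw [hw, norm_smul, mul_pow, Real.norm_of_nonneg (by positivity), Real.sq_sqrt hη.le]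
    refine mul_le_mul_of_nonneg_left ?_ hη.le
    rw [← mul_pow]
    refine pow_le_pow_left₀ (norm_nonneg _) ?_ 2
    refine (ContinuousLinearMap.le_opNorm _ _).trans ?_
    rw [LinearIsometryEquiv.norm_map]
    gcongr
  have hinner : ∀ z, ⟪v, T z⟫ = ⟪w, z⟫ := by
    intro z
    rw [hTS, hw, real_inner_smul_right, real_inner_smul_left,
      ContinuousLinearMap.adjoint_inner_left]
  have hnorm : ∀ z, ‖T z‖ ^ 2 ≤ η * L ^ 2 * ‖z‖ ^ 2 := by
    intro z
    rw [hTS, norm_smul, mul_pow, Real.norm_of_nonneg (by positivity), Real.sq_sqrt hη.le,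
      mul_assoc, ← mul_pow]
    gcongr
    exact (S'.le_opNorm z).trans (by gcongr)
  set t := k * (η * L ^ 2) with ht
  have ht0 : 0 ≤ t := by positivity
  have ht1 : t ≤ 1 / 4 := by rw [ht]; linarith
  obtain ⟨h1, h2⟩ := integral_exp_stdGaussian (d := d) (k := t) (by linarith) w
  have hle : ∀ z, rexp (⟪v, m + T z - m⟫ + k * ‖m + T z - m‖ ^ 2) ≤
      rexp (⟪w, z⟫ + t * ‖z‖ ^ 2) := by
    intro z
    rw [add_sub_cancel_left, hinner, Real.exp_le_exp, ht, mul_assoc]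
    gcongr
    exact hnorm z
  have hF : Continuous fun z : EuclideanSpace ℝ (Fin d) =>
      rexp (⟪v, z - m⟫ + k * ‖z - m‖ ^ 2) := by fun_prop
  have hint : Integrable (fun z => rexp (⟪v, m + T z - m⟫ + k * ‖m + T z - m‖ ^ 2))
      (gaussianMeasure 0 1) := by
    refine h1.mono' (by fun_prop) (Filter.Eventually.of_forall fun z => ?_)
    rw [Real.norm_of_nonneg (by positivity)]
    exact hle z
  rw [hAA, gaussianMeasure_mul_transpose_eq_map m hA]
  refine ⟨Measure.isProbabilityMeasure_map hmeas.aemeasurable,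
    (integrable_map_measure hF.aestronglyMeasurable hmeas.aemeasurable).2 hint, ?_⟩
  rw [integral_map hmeas.aemeasurable hF.aestronglyMeasurable]
  refine (integral_mono hint h1 hle).trans ?_
  rw [h2, mul_add, Real.exp_add]
  refine mul_le_mul ?_ ?_ (by positivity) (by positivity)
  · refine (inv_one_sub_rpow_le_exp (by linarith) (by linarith) (by positivity)).trans ?_
    rw [Real.exp_le_exp, ht]
    linarith
  · rw [Real.exp_le_exp, div_le_iff₀ (by linarith)]
    refine hwn.trans (le_mul_of_one_le_right (by positivity) (by linarith))

end Gaussian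

section Lyapunov

variable {d : ℕ}

lemma Ufun_nonneg (x : EuclideanSpace ℝ (Fin d)) : 0 ≤ Ufun x := by
  unfold Ufun
  split_ifs <;> positivity

lemma Ufun_le_exp (x : EuclideanSpace ℝ (Fin d)) : Ufun x ≤ rexp (3 * ‖x‖) := by
  unfold Ufun
  split_ifs with h
  · exact le_rfl
  · push Not at h
    have h1 := Real.add_one_le_exp (3 * ‖x‖ - 1)
    have h2 : (3 * ‖x‖) ^ 2 ≤ rexp (3 * ‖x‖ - 1) := by nlinarith [norm_nonneg x]
    calc 9 * rexp 1 * ‖x‖ ^ 2 = rexp 1 * (3 * ‖x‖) ^ 2 := by ring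
      _ ≤ rexp 1 * rexp (3 * ‖x‖ - 1) := by gcongr
      _ = rexp (3 * ‖x‖) := by rw [← Real.exp_add]; ring_nf

lemma Ufun_le_sq {x : EuclideanSpace ℝ (Fin d)} (hx : ‖x‖ ≤ 1) :
    Ufun x ≤ 9 * rexp 1 * ‖x‖ ^ 2 := by
  unfold Ufun
  split_ifs with h
  · set u := (3 * ‖x‖ - 1) / 2 with hu
    have h0 : 0 ≤ u := by rw [hu]; linarith
    have h1 : u ≤ 1 := by rw [hu]; linarith
    have h2 : rexp u ≤ 1 + 2 * u := by
      have := (abs_le.1 (Real.abs_exp_sub_one_sub_id_le (x := u) (by rwa [abs_of_nonneg h0]))).2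
      nlinarith
    calc rexp (3 * ‖x‖) = rexp 1 * rexp u ^ 2 := by
          rw [← Real.exp_nat_mul, ← Real.exp_add]; congr 1; rw [hu]; push_cast; ring
      _ ≤ rexp 1 * (1 + 2 * u) ^ 2 := by gcongr
      _ = 9 * rexp 1 * ‖x‖ ^ 2 := by rw [hu]; ring
  · exact le_rfl

lemma Ufun_le_exp_sq_sub_sq {x : EuclideanSpace ℝ (Fin d)} (hx : ‖x‖ ≤ 1 / 3)
    (z : EuclideanSpace ℝ (Fin d)) :
    Ufun z ≤ 9 * rexp 1 * ‖x‖ ^ 2 + 3 * rexp 1 * (rexp (3 * (‖z‖ ^ 2 - ‖x‖ ^ 2)) - 1) := by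
  have he : 2 ≤ rexp 1 := by have := Real.add_one_le_exp (1 : ℝ); linarith
  rcases le_total ‖z‖ 1 with hz | hz
  · refine (Ufun_le_sq hz).trans ?_
    have := Real.add_one_le_exp (3 * (‖z‖ ^ 2 - ‖x‖ ^ 2))
    have h2 := mul_le_mul_of_nonneg_left this (show 0 ≤ 3 * rexp 1 by positivity)
    linarith
  · refine (Ufun_le_exp z).trans ?_
    have hx2 : ‖x‖ ^ 2 ≤ 1 / 9 := by nlinarith [norm_nonneg x]
    have h1 : 2 / 3 * rexp (3 * ‖z‖) ≤ rexp (3 * (‖z‖ ^ 2 - ‖x‖ ^ 2)) := by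
      have h2 : 3 * ‖z‖ + (-1 / 3) ≤ 3 * (‖z‖ ^ 2 - ‖x‖ ^ 2) := by nlinarith
      have h3 := Real.exp_le_exp.2 h2
      rw [Real.exp_add] at h3
      have h4 := Real.add_one_le_exp (-1 / 3 : ℝ)
      nlinarith [Real.exp_pos (3 * ‖z‖)]
    have h5 : 4 ≤ rexp (3 * ‖z‖) := by
      have := Real.add_one_le_exp (3 * ‖z‖); linarith
    have h6 : 0 ≤ 9 * rexp 1 * ‖x‖ ^ 2 := by positivity
    nlinarith

lemma norm_sq_eq_add_inner_sub (m z : EuclideanSpace ℝ (Fin d)) :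
    ‖z‖ ^ 2 = ‖m‖ ^ 2 + 2 * ⟪m, z - m⟫ + ‖z - m‖ ^ 2 := by
  rw [← norm_add_sq_real, add_sub_cancel]

lemma integral_Ufun_le_exp {L η q P : ℝ} (hη : 0 < η) (hLη : 18 * η * L ^ 2 ≤ 1)
    {S : Matrix (Fin d) (Fin d) ℝ} (hS : IsUnit S) (hSL : matOpNorm S ≤ L)
    {x m : EuclideanSpace ℝ (Fin d)} (hx : 1 / 3 ≤ ‖x‖) (hm : ‖m‖ ^ 2 ≤ ‖x‖ ^ 2 + q)
    (hmP : ‖m‖ ≤ P * ‖x‖) :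
    ∫ z, Ufun z ∂(gaussianMeasure m (η • (S * S.transpose))) ≤
      rexp (3 * ‖x‖ + 3 * q / (2 * ‖x‖) + η * (9 * L ^ 2 * d + 9 * L ^ 2 * P ^ 2)) := by
  have hx0 : 0 < ‖x‖ := by linarith
  obtain ⟨_, hint, hle⟩ := integral_exp_gaussianMeasure_le (k := 9 / 2) hη (by norm_num)
    (by linarith) hS hSL m ((3 / ‖x‖) • m)
  have hv : ‖(3 / ‖x‖) • m‖ ^ 2 ≤ 9 * P ^ 2 := by
    have : ‖(3 / ‖x‖) • m‖ ≤ 3 * P := by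
      rw [norm_smul, Real.norm_of_nonneg (by positivity), div_mul_eq_mul_div, div_le_iff₀ hx0]
      linarith
    calc ‖(3 / ‖x‖) • m‖ ^ 2 ≤ (3 * P) ^ 2 := by gcongr
      _ = 9 * P ^ 2 := by ring
  have hpt : ∀ z, Ufun z ≤ rexp (3 * ‖x‖ + 3 * q / (2 * ‖x‖)) *
      rexp (⟪(3 / ‖x‖) • m, z - m⟫ + 9 / 2 * ‖z - m‖ ^ 2) := by
    intro z
    refine (Ufun_le_exp z).trans ?_
    rw [← Real.exp_add, Real.exp_le_exp, real_inner_smul_left]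
    have h1 : 3 * ‖z‖ ≤ 3 / (2 * ‖x‖) * (‖z‖ ^ 2 + ‖x‖ ^ 2) := by
      rw [div_mul_eq_mul_div, le_div_iff₀ (by positivity)]
      nlinarith [sq_nonneg (‖z‖ - ‖x‖)]
    have h2 : 3 / (2 * ‖x‖) ≤ 9 / 2 := by
      rw [div_le_iff₀ (by positivity)]; linarith
    have h3 : ‖z‖ ^ 2 + ‖x‖ ^ 2 ≤ 2 * ‖x‖ ^ 2 + q + 2 * ⟪m, z - m⟫ + ‖z - m‖ ^ 2 := by
      rw [norm_sq_eq_add_inner_sub m z]; linarith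
    calc 3 * ‖z‖ ≤ 3 / (2 * ‖x‖) * (2 * ‖x‖ ^ 2 + q + 2 * ⟪m, z - m⟫ + ‖z - m‖ ^ 2) :=
          h1.trans (by gcongr)
      _ = 3 * ‖x‖ + 3 * q / (2 * ‖x‖) + (3 / ‖x‖ * ⟪m, z - m⟫)
          + 3 / (2 * ‖x‖) * ‖z - m‖ ^ 2 := by field_simp
      _ ≤ 3 * ‖x‖ + 3 * q / (2 * ‖x‖) + (3 / ‖x‖ * ⟪m, z - m⟫) + 9 / 2 * ‖z - m‖ ^ 2 := by
          gcongr
      _ = _ := by ring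
  refine (integral_mono_of_nonneg (Filter.Eventually.of_forall Ufun_nonneg) (hint.const_mul _)
    (Filter.Eventually.of_forall hpt)).trans ?_
  rw [integral_const_mul, Real.exp_add _ (η * _)]
  refine mul_le_mul_of_nonneg_left (hle.trans ?_) (by positivity)
  rw [Real.exp_le_exp]
  have := mul_le_mul_of_nonneg_left hv (sq_nonneg L)
  refine mul_le_mul_of_nonneg_left ?_ hη.le
  linarith

lemma integral_Ufun_le_sq {L η q P : ℝ} (hη : 0 < η) (hLη : 18 * η * L ^ 2 ≤ 1)
    {S : Matrix (Fin d) (Fin d) ℝ} (hS : IsUnit S) (hSL : matOpNorm S ≤ L)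
    {x m : EuclideanSpace ℝ (Fin d)} (hx : ‖x‖ ≤ 1 / 3) (hm : ‖m‖ ^ 2 ≤ ‖x‖ ^ 2 + q)
    (hmP : ‖m‖ ≤ P) :
    ∫ z, Ufun z ∂(gaussianMeasure m (η • (S * S.transpose))) ≤
      9 * rexp 1 * ‖x‖ ^ 2 +
        3 * rexp 1 * (rexp (3 * q + η * (6 * L ^ 2 * d + 36 * L ^ 2 * P ^ 2)) - 1) := by
  obtain ⟨_, hint, hle⟩ := integral_exp_gaussianMeasure_le (k := 3) hη (by norm_num)
    (by nlinarith [sq_nonneg L]) hS hSL m ((6 : ℝ) • m)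
  have hv : ‖(6 : ℝ) • m‖ ^ 2 ≤ 36 * P ^ 2 := by
    rw [norm_smul, mul_pow, Real.norm_of_nonneg (by norm_num)]
    have : ‖m‖ ^ 2 ≤ P ^ 2 := by gcongr
    linarith
  have hpt : ∀ z, Ufun z ≤ 9 * rexp 1 * ‖x‖ ^ 2 + 3 * rexp 1 * (rexp (3 * q) *
      rexp (⟪(6 : ℝ) • m, z - m⟫ + 3 * ‖z - m‖ ^ 2) - 1) := by
    intro z
    refine (Ufun_le_exp_sq_sub_sq hx z).trans ?_
    rw [← Real.exp_add, real_inner_smul_left]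
    gcongr
    rw [norm_sq_eq_add_inner_sub m z]
    linarith
  have hint' : Integrable (fun z => 3 * rexp 1 * (rexp (3 * q) *
      rexp (⟪(6 : ℝ) • m, z - m⟫ + 3 * ‖z - m‖ ^ 2) - 1))
      (gaussianMeasure m (η • (S * S.transpose))) :=
    ((hint.const_mul _).sub (integrable_const _)).const_mul _
  refine (integral_mono_of_nonneg (Filter.Eventually.of_forall Ufun_nonneg)
    ((integrable_const _).add hint') (Filter.Eventually.of_forall hpt)).trans ?_
  simp only [Pi.add_apply]
  rw [integral_add (integrable_const _) hint', integral_const_mul (3 * rexp 1),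
    integral_sub (hint.const_mul _) (integrable_const _),
    integral_const_mul (rexp (3 * q)), Real.exp_add]
  simp only [integral_const, probReal_univ, one_smul]
  gcongr
  refine hle.trans ?_
  rw [Real.exp_le_exp]
  have := mul_le_mul_of_nonneg_left hv (sq_nonneg L)
  refine mul_le_mul_of_nonneg_left ?_ hη.le
  linarith

lemma exp_mul_le_one_add {η K : ℝ} (hη : 0 ≤ η) (hη1 : η ≤ 1) (hK : 0 ≤ K) :
    rexp (η * K) ≤ 1 + η * (K * rexp K) := by
  have h1 := Real.add_one_le_exp (-(η * K))
  have h2 : rexp (η * K) ≤ rexp K := Real.exp_le_exp.2 (by nlinarith)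
  have h3 : rexp (-(η * K)) * rexp (η * K) = 1 := by rw [← Real.exp_add]; simp
  have h4 := mul_le_mul_of_nonneg_right h1 (Real.exp_pos (η * K)).le
  have h5 := mul_le_mul_of_nonneg_left h2 (mul_nonneg hη hK)
  linarith

end Lyapunov

section Drift

variable {E : Type*} [NormedAddCommGroup E] [InnerProductSpace ℝ E]

lemma norm_fderiv_le_of_polynomial_lipschitz {r L : ℝ} (hr : 0 ≤ r) (hL : 0 ≤ L) {b : E → E}
    (hb : Differentiable ℝ b)
    (hlip : ∀ x y, ‖b x - b y‖ ≤ L * (1 + ‖x‖ ^ r + ‖y‖ ^ r) * ‖x - y‖) {x : E} (hx : 1 ≤ ‖x‖) :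
    ‖fderiv ℝ b x‖ ≤ L * (2 + 2 ^ r) * ‖x‖ ^ r := by
  refine (hb x).hasFDerivAt.le_of_lip' (by positivity) ?_
  filter_upwards [Metric.ball_mem_nhds x one_pos] with y hy
  rw [Metric.mem_ball, dist_eq_norm] at hy
  refine (hlip y x).trans ?_
  have h1 : ‖y‖ ≤ 2 * ‖x‖ := by
    have := norm_sub_norm_le y x
    linarith
  have h2 : ‖y‖ ^ r ≤ 2 ^ r * ‖x‖ ^ r := by
    rw [← Real.mul_rpow (by norm_num) (norm_nonneg _)]
    gcongr
  have h3 : 1 ≤ ‖x‖ ^ r := Real.one_le_rpow hx hr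
  rw [mul_assoc L (2 + 2 ^ r)]
  refine mul_le_mul_of_nonneg_right (mul_le_mul_of_nonneg_left ?_ hL) (norm_nonneg _)
  linarith

/-- The mean of one tamed Euler step contracts outside a large ball. -/
lemma exists_norm_tamed_step_sq_le {r L lam α : ℝ} (hr : 0 ≤ r) (hL : 0 < L) (hlam : 0 < lam)
    (hα0 : 0 < α) (hα : α < 1 / 2) {b : E → E} (hb : Differentiable ℝ b)
    (hdissip : ∀ x, ⟪x, b x⟫ ≤ L - lam * ‖x‖ ^ (r + 2))
    (hgrowth : ∀ x, ‖b x‖ ≤ L * (1 + ‖x‖ * ‖fderiv ℝ b x‖))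
    (hlip : ∀ x y, ‖b x - b y‖ ≤ L * (1 + ‖x‖ ^ r + ‖y‖ ^ r) * ‖x - y‖) :
    ∃ c > 0, ∃ R ≥ 1, ∃ η₀ > 0, ∀ (x : E) (η : ℝ), R ≤ ‖x‖ → 0 < η → η ≤ η₀ →
      ‖x + (η / (1 + η ^ α * ‖fderiv ℝ b x‖)) • b x‖ ^ 2 ≤ ‖x‖ ^ 2 - c * η * ‖x‖ ^ 2 := by
  set K₁ := L * (2 + 2 ^ r) with hK₁
  have hK₁0 : 0 < K₁ := by positivity
  set K₂ := L * (1 + 2 * L / lam) with hK₂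
  have hK₂0 : 0 < K₂ := by positivity
  set ε := lam / (2 * K₂ ^ 2 * K₁) with hε
  have hε0 : 0 < ε := by positivity
  refine ⟨lam / (1 + K₁), by positivity, max 1 (4 * L / lam), le_max_left _ _, min 1 (ε ^ 2),
    by positivity, fun x η hxR hη hη₀ => ?_⟩
  have hx1 : 1 ≤ ‖x‖ := (le_max_left _ _).trans hxR
  have hx0 : 0 < ‖x‖ := by linarith
  have hxL : 4 * L ≤ lam * ‖x‖ := by
    have := (le_max_right _ _).trans hxR
    rw [div_le_iff₀ hlam] at this; linarith
  have hη1 : η ≤ 1 := hη₀.trans (min_le_left _ _)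
  have hηε : η ≤ ε ^ 2 := hη₀.trans (min_le_right _ _)
  set M := ‖fderiv ℝ b x‖ with hM
  set X := ‖x‖ ^ r with hX
  have hX1 : 1 ≤ X := Real.one_le_rpow hx1 hr
  have hpow : ‖x‖ ^ (r + 2) = X * ‖x‖ ^ 2 := by
    rw [Real.rpow_add hx0]; norm_cast
  have hMle : M ≤ K₁ * X := norm_fderiv_le_of_polynomial_lipschitz hr hL.le hb hlip hx1
  have hd : ⟪x, b x⟫ ≤ L - lam * (X * ‖x‖ ^ 2) := by rw [← hpow]; exact hdissip x
  have hg : ‖b x‖ ≤ L * (1 + ‖x‖ * M) := hgrowth x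
  have hxx : ‖x‖ ≤ ‖x‖ ^ 2 := le_self_pow₀ hx1 two_ne_zero
  have hxX : ‖x‖ ^ 2 ≤ X * ‖x‖ ^ 2 := le_mul_of_one_le_left (sq_nonneg _) hX1
  have hLX : 4 * L ≤ lam * (X * ‖x‖ ^ 2) :=
    hxL.trans (mul_le_mul_of_nonneg_left (hxx.trans hxX) hlam.le)
  have hMge : lam / (2 * L) ≤ M := by
    have h1 : -⟪x, b x⟫ ≤ ‖x‖ * ‖b x‖ := by
      have := abs_real_inner_le_norm x (b x)
      linarith [neg_abs_le ⟪x, b x⟫]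
    have h2 : ‖x‖ * ‖b x‖ ≤ ‖x‖ * (L * (1 + ‖x‖ * M)) := by gcongr
    have h3 : lam * ‖x‖ ^ 2 ≤ L + L * ‖x‖ + L * M * ‖x‖ ^ 2 := by
      have := mul_le_mul_of_nonneg_left hxX hlam.le
      linarith
    have h4 : 2 * (L + L * ‖x‖) ≤ lam * ‖x‖ ^ 2 := by
      have h5 := mul_le_mul_of_nonneg_right hxL hx0.le
      have h6 := mul_le_mul_of_nonneg_left hx1 hL.le
      linarith
    have h5 : lam * ‖x‖ ^ 2 ≤ (M * (2 * L)) * ‖x‖ ^ 2 := by linarith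
    rw [div_le_iff₀ (by positivity)]
    exact le_of_mul_le_mul_right h5 (by positivity)
  have hM0 : 0 < M := lt_of_lt_of_le (by positivity) hMge
  have hbK : ‖b x‖ ≤ K₂ * (‖x‖ * M) := by
    refine hg.trans ?_
    rw [hK₂, mul_assoc]
    refine mul_le_mul_of_nonneg_left ?_ hL.le
    have h1 : 1 ≤ 2 * L / lam * M := by
      rw [div_mul_eq_mul_div, le_div_iff₀ hlam]
      rw [div_le_iff₀ (by positivity)] at hMge
      linarith
    have h2 : 2 * L / lam * M ≤ 2 * L / lam * (‖x‖ * M) := by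
      gcongr
      exact le_mul_of_one_le_left hM0.le hx1
    linarith
  set D := 1 + η ^ α * M with hD
  have hηα : 0 < η ^ α := Real.rpow_pos_of_pos hη α
  have hD0 : 0 < D := by positivity
  set h := η / D with hh
  have hh0 : 0 < h := by positivity
  have hηpow : η ≤ ε * η ^ α := by
    have h1 : √η ≤ ε := Real.sqrt_le_iff.2 ⟨hε0.le, hηε⟩
    have h2 : √η ≤ η ^ α := by
      rw [Real.sqrt_eq_rpow]
      exact Real.rpow_le_rpow_of_exponent_ge hη hη1 hα.le
    calc η = √η * √η := (Real.mul_self_sqrt hη.le).symm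
      _ ≤ ε * η ^ α := by gcongr
  have hhb : h * ‖b x‖ ^ 2 ≤ lam / 2 * (X * ‖x‖ ^ 2) := by
    have h1 : h * M ≤ ε := by
      rw [hh, div_mul_eq_mul_div, div_le_iff₀ hD0, hD]
      have := mul_le_mul_of_nonneg_right hηpow hM0.le
      linarith
    have h2 : ‖b x‖ ^ 2 ≤ (K₂ * (‖x‖ * M)) ^ 2 := by gcongr
    calc h * ‖b x‖ ^ 2 ≤ h * (K₂ * (‖x‖ * M)) ^ 2 := by gcongr
      _ = (h * M) * (K₂ ^ 2 * ‖x‖ ^ 2 * M) := by ring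
      _ ≤ ε * (K₂ ^ 2 * ‖x‖ ^ 2 * (K₁ * X)) := by gcongr
      _ = lam / 2 * (X * ‖x‖ ^ 2) := by rw [hε]; field_simp
  have hhX : η / (1 + K₁) ≤ h * X := by
    rw [hh, div_mul_eq_mul_div, div_le_div_iff₀ (by positivity) hD0, mul_assoc]
    refine mul_le_mul_of_nonneg_left ?_ hη.le
    have h1 : η ^ α ≤ 1 := Real.rpow_le_one hη.le hη1 hα0.le
    have h2 : η ^ α * M ≤ 1 * (K₁ * X) := by gcongr
    rw [hD]
    linarith
  rw [norm_add_sq_real, real_inner_smul_right, norm_smul, Real.norm_of_nonneg hh0.le, mul_pow]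
  have e1 : h * ⟪x, b x⟫ ≤ h * (L - lam * (X * ‖x‖ ^ 2)) := by gcongr
  have e2 : h ^ 2 * ‖b x‖ ^ 2 ≤ h * (lam / 2 * (X * ‖x‖ ^ 2)) := by
    rw [pow_two, mul_assoc]; gcongr
  have e3 : h * (4 * L) ≤ h * (lam * (X * ‖x‖ ^ 2)) := by gcongr
  have e4 : η / (1 + K₁) * (lam * ‖x‖ ^ 2) ≤ h * X * (lam * ‖x‖ ^ 2) := by gcongr
  have e5 : lam / (1 + K₁) * η * ‖x‖ ^ 2 = η / (1 + K₁) * (lam * ‖x‖ ^ 2) := by ring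
  linarith

end Drift

theorem stmt15 {d : ℕ} (r L₁ lam L₂ α : ℝ) (hr : 0 ≤ r) (hL₁ : 0 < L₁) (hlam : 0 < lam)
    (hL₂ : 0 < L₂) (hα0 : 0 < α) (hα : α < 1 / 2)
    (b : EuclideanSpace ℝ (Fin d) → EuclideanSpace ℝ (Fin d))
    (σ : EuclideanSpace ℝ (Fin d) → Matrix (Fin d) (Fin d) ℝ)
    -- drift assumption
    (hb : ContDiff ℝ 1 b)
    (hdissip : ∀ x, ⟪x, b x⟫ ≤ L₁ - lam * ‖x‖ ^ (r + 2))
    (hgrowth : ∀ x, ‖b x‖ ≤ L₁ * (1 + ‖x‖ * ‖fderiv ℝ b x‖))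
    (hlip : ∀ x y, ‖b x - b y‖ ≤ L₁ * (1 + ‖x‖ ^ r + ‖y‖ ^ r) * ‖x - y‖)
    -- diffusion assumption (σ viewed as a map into linear operators on ℝ^d)
    (hσ : ContDiff ℝ 2
      (fun y => LinearMap.toContinuousLinearMap (Matrix.toEuclideanLin (σ y))))
    (hσinv : ∀ x, IsUnit (σ x))
    (hσbd : ∀ x, matOpNorm (σ x) ≤ L₂)
    (hσinvbd : ∀ x, matOpNorm (σ x)⁻¹ ≤ L₂)
    (hσder : ∀ x, ‖fderiv ℝ
      (fun y => LinearMap.toContinuousLinearMap (Matrix.toEuclideanLin (σ y))) x‖ ≤ L₂)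
    (hσder2 : ∀ x, ‖iteratedFDeriv ℝ 2
      (fun y => LinearMap.toContinuousLinearMap (Matrix.toEuclideanLin (σ y))) x‖ ≤ L₂) :
    ∃ C > 0, ∃ lam' > 0, ∃ ηbar > 0,
      ∀ (x : EuclideanSpace ℝ (Fin d)) (η : ℝ), 0 < η → η ≤ ηbar →
        ∫ z, Ufun z
            ∂(gaussianMeasure (x + (η / (1 + η ^ α * ‖fderiv ℝ b x‖)) • b x)
              (η • (σ x * (σ x).transpose)))
          ≤ Real.exp (-lam' * η) * Ufun x + C * η := by
  have hbd : Differentiable ℝ b := hb.differentiable one_ne_zero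
  obtain ⟨c, hc, R₀, hR₀, η₀, hη₀, hstep⟩ :=
    exists_norm_tamed_step_sq_le hr hL₁ hlam hα0 hα hbd hdissip hgrowth hlip
  set N := 9 * L₂ ^ 2 * d + 9 * L₂ ^ 2 * 1 ^ 2 with hN
  set R := max R₀ ((N + 1) / (3 / 2 * c)) with hR
  have hR0 : 0 < R := lt_of_lt_of_le (by linarith) (le_max_left _ _)
  obtain ⟨B₀, hB₀⟩ := (isCompact_closedBall
    (0 : EuclideanSpace ℝ (Fin d)) R).exists_bound_of_continuousOn hb.continuous.continuousOn
  set B := max B₀ 0 with hBdef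
  have hB0 : 0 ≤ B := le_max_right _ _
  have hB : ∀ x, ‖x‖ ≤ R → ‖b x‖ ≤ B := fun x hx =>
    (hB₀ x (by simpa using hx)).trans (le_max_left _ _)
  set Q := 2 * R * B + B ^ 2 with hQ
  have hQ0 : 0 ≤ Q := by positivity
  set K₁ := 9 / 2 * Q + (9 * L₂ ^ 2 * d + 9 * L₂ ^ 2 * (3 * (R + B)) ^ 2) with hK₁
  have hK₁0 : 0 ≤ K₁ := by positivity
  set K₂ := 3 * Q + (6 * L₂ ^ 2 * d + 36 * L₂ ^ 2 * (R + B) ^ 2) with hK₂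
  have hK₂0 : 0 ≤ K₂ := by positivity
  set W := rexp (3 * R) with hW
  have hW0 : 0 < W := Real.exp_pos _
  refine ⟨W + W * (K₁ * rexp K₁) + 3 * rexp 1 * (K₂ * rexp K₂), by positivity, 1, one_pos,
    min (min η₀ 1) (1 / (18 * L₂ ^ 2)), by positivity, fun x η hη hηbar => ?_⟩
  have hηη₀ : η ≤ η₀ := hηbar.trans ((min_le_left _ _).trans (min_le_left _ _))
  have hη1 : η ≤ 1 := hηbar.trans ((min_le_left _ _).trans (min_le_right _ _))
  have hηL : 18 * η * L₂ ^ 2 ≤ 1 := by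
    have := hηbar.trans (min_le_right _ _)
    rw [le_div_iff₀ (by positivity)] at this
    linarith
  set h := η / (1 + η ^ α * ‖fderiv ℝ b x‖) with hh
  have hD : 1 ≤ 1 + η ^ α * ‖fderiv ℝ b x‖ := le_add_of_nonneg_right (by positivity)
  have hh0 : 0 ≤ h := by positivity
  have hhη : h ≤ η := div_le_self hη.le hD
  set m := x + h • b x with hm
  have hdecay : 1 - η ≤ rexp (-1 * η) := by
    have := Real.add_one_le_exp (-1 * η); linarith
  rcases le_total R ‖x‖ with hxR | hxR
  · have hx1 : 1 ≤ ‖x‖ := hR₀.trans ((le_max_left _ _).trans hxR)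
    have hm2 : ‖m‖ ^ 2 ≤ ‖x‖ ^ 2 + -(c * η * ‖x‖ ^ 2) := by
      have := hstep x η ((le_max_left _ _).trans hxR) hη hηη₀
      linarith
    have hmP : ‖m‖ ≤ 1 * ‖x‖ := by
      rw [one_mul]
      refine le_of_sq_le_sq ?_ (norm_nonneg _)
      have : 0 ≤ c * η * ‖x‖ ^ 2 := by positivity
      linarith
    refine (integral_Ufun_le_exp hη hηL (hσinv x) (hσbd x) (by linarith) hm2 hmP).trans ?_
    have hU : Ufun x = rexp (3 * ‖x‖) := if_pos (by linarith)
    rw [hU, ← Real.exp_add]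
    refine le_add_of_le_of_nonneg (Real.exp_le_exp.2 ?_) (by positivity)
    have hNx : N + 1 ≤ 3 / 2 * c * ‖x‖ := by
      have := (le_max_right _ _).trans hxR
      rw [div_le_iff₀ (by positivity)] at this
      linarith
    have h1 : 3 * -(c * η * ‖x‖ ^ 2) / (2 * ‖x‖) = -(η * (3 / 2 * c * ‖x‖)) := by
      have : ‖x‖ ≠ 0 := by positivity
      field_simp
    have h2 := mul_le_mul_of_nonneg_left hNx hη.le
    rw [h1]
    linarith
  · have hbx := hB x hxR
    have hhb : ‖h • b x‖ ≤ η * B := by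
      rw [norm_smul, Real.norm_of_nonneg hh0]
      gcongr
    have hmn : ‖m‖ ≤ ‖x‖ + η * B := (norm_add_le _ _).trans (by gcongr)
    have hmRB : ‖m‖ ≤ R + B := hmn.trans (add_le_add hxR (mul_le_of_le_one_left hB0 hη1))
    have hm2 : ‖m‖ ^ 2 ≤ ‖x‖ ^ 2 + η * Q := by
      have h1 : ‖m‖ ^ 2 ≤ (‖x‖ + η * B) ^ 2 := by gcongr
      have h2 : η * B * ‖x‖ ≤ η * B * R := by gcongr
      have h3 : η * (η * B ^ 2) ≤ η * (1 * B ^ 2) := by gcongr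
      rw [hQ]
      linarith
    have hUW : Ufun x ≤ W := (Ufun_le_exp x).trans (Real.exp_le_exp.2 (by linarith))
    have hdecayU : Ufun x ≤ rexp (-1 * η) * Ufun x + W * η := by
      have h1 := mul_le_mul_of_nonneg_right hdecay (Ufun_nonneg x)
      have h2 := mul_le_mul_of_nonneg_left hUW hη.le
      linarith
    have hA : 0 ≤ W * (K₁ * rexp K₁) * η := by positivity
    have hA' : 0 ≤ 3 * rexp 1 * (K₂ * rexp K₂) * η := by positivity
    rcases le_or_gt (1 / 3) ‖x‖ with hx | hx
    · have hmP : ‖m‖ ≤ 3 * (R + B) * ‖x‖ := by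
        have := mul_le_mul_of_nonneg_left hx (add_nonneg hR0.le hB0)
        linarith
      have hU : Ufun x = rexp (3 * ‖x‖) := if_pos hx
      have hle : ∫ z, Ufun z ∂(gaussianMeasure m (η • (σ x * (σ x).transpose))) ≤
          Ufun x * rexp (η * K₁) := by
        refine (integral_Ufun_le_exp hη hηL (hσinv x) (hσbd x) hx hm2 hmP).trans ?_
        rw [hU, ← Real.exp_add, Real.exp_le_exp, hK₁]
        have : 3 * (η * Q) / (2 * ‖x‖) ≤ η * (9 / 2 * Q) := by
          rw [div_le_iff₀ (by linarith)]
          have := mul_le_mul_of_nonneg_left hx (mul_nonneg hη.le hQ0)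
          linarith
        linarith
      have h1 := mul_le_mul_of_nonneg_left (exp_mul_le_one_add hη.le hη1 hK₁0) (Ufun_nonneg x)
      have h2 : Ufun x * (η * (K₁ * rexp K₁)) ≤ W * (η * (K₁ * rexp K₁)) := by gcongr
      linarith
    · have hU : Ufun x = 9 * rexp 1 * ‖x‖ ^ 2 := if_neg (by linarith)
      have hle := integral_Ufun_le_sq hη hηL (hσinv x) (hσbd x) hx.le hm2 hmRB
      rw [← hU, show 3 * (η * Q) + η * (6 * L₂ ^ 2 * d + 36 * L₂ ^ 2 * (R + B) ^ 2) = η * K₂ by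
        rw [hK₂]; ring] at hle
      have h1 := mul_le_mul_of_nonneg_left (exp_mul_le_one_add hη.le hη1 hK₂0)
        (show 0 ≤ 3 * rexp 1 by positivity)
      linarith
end
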